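/- Suppose I_k is a minimum-weight common independent set of size k of matroids M₁ and M₂, and some common independent set of size k+1 exists. Then min_{k+1}(M₁,M₂) = W(I_k) + L, where L is the minimum weight of a directed path from X₁ to X₂ in the exchange graph 𝓔(M₁,M₂,I_k). -/

import Mathlib

/-- `I` is a common independent set of the matroids `M₁` and `M₂`. -/
def CommonIndep {α : Type*} (M₁ M₂ : Matroid α) (I : Finset α) : Prop :=
  M₁.Indep ↑I ∧ M₂.Indep ↑I

/-- The weight `W(I) = ∑_{s ∈ I} W(s)` of a set. -/
def setW {α : Type*} (W : α → ℤ) (I : Finset α) : ℤ := ∑ x ∈ I, W x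

/-- Adjacency in the exchange graph `𝓔(M₁,M₂,I)`: for `y ∈ I` and `x ∉ I` there is an
edge `(y,x)` iff `(I \ {y}) ∪ {x} ∈ 𝓘₁`, and an edge `(x,y)` iff `(I \ {y}) ∪ {x} ∈ 𝓘₂`. -/
def ExchAdj {α : Type*} [DecidableEq α] (M₁ M₂ : Matroid α) (I : Finset α) (u v : α) : Prop :=
  (u ∈ I ∧ v ∉ I ∧ M₁.Indep ↑(insert v (I.erase u))) ∨
  (u ∉ I ∧ v ∈ I ∧ M₂.Indep ↑(insert u (I.erase v)))

/-- The vertex weights of the exchange graph: `l(s) = -W(s)` if `s ∈ I`, else `l(s) = W(s)`. -/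
def exchWt {α : Type*} [DecidableEq α] (W : α → ℤ) (I : Finset α) (s : α) : ℤ :=
  if s ∈ I then -W s else W s

/-- The weight of a walk/path/cycle given by the vertex list `l`: the sum of the vertex
weights over `l`. -/
def listW {α : Type*} [DecidableEq α] (W : α → ℤ) (I : Finset α) (l : List α) : ℤ :=
  (l.map (exchWt W I)).sum

/-- `l` is (the vertex list of) a simple directed cycle for the adjacency relation `Adj`. -/
def IsCycle {α : Type*} (Adj : α → α → Prop) (l : List α) : Prop :=
  ∃ h : l ≠ [], l.Chain' Adj ∧ Adj (l.getLast h) (l.head h) ∧ l.Nodup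

/-- `x ∈ X₁`, i.e. `x ∉ I` and `I ∪ {x} ∈ 𝓘₁` (and analogously for `X₂` with `M₂`). -/
def memX {α : Type*} [DecidableEq α] (M : Matroid α) (I : Finset α) (x : α) : Prop :=
  x ∉ I ∧ M.Indep ↑(insert x I)

/-- `l` is (the vertex list of) a simple directed path from `X₁` to `X₂` in the exchange
graph `𝓔(M₁,M₂,I)`. -/
def IsXPath {α : Type*} [DecidableEq α] (M₁ M₂ : Matroid α) (I : Finset α) (l : List α) : Prop :=
  ∃ h : l ≠ [], l.Chain' (ExchAdj M₁ M₂ I) ∧ l.Nodup ∧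
    memX M₁ I (l.head h) ∧ memX M₂ I (l.getLast h)

/-- `I` is a minimum-weight common independent set of size `k` (not necessarily unique). -/
def IsMinWtOfSize {α : Type*} (M₁ M₂ : Matroid α) (W : α → ℤ) (k : ℕ) (I : Finset α) : Prop :=
  CommonIndep M₁ M₂ I ∧ I.card = k ∧
    ∀ J : Finset α, CommonIndep M₁ M₂ J → J.card = k → setW W I ≤ setW W J

/-- `W` isolates the size-`k` common independent set `I`: `I` is the unique minimum-weight
common independent set of size `k`. -/
def Isolates {α : Type*} (M₁ M₂ : Matroid α) (W : α → ℤ) (k : ℕ) (I : Finset α) : Prop :=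
  CommonIndep M₁ M₂ I ∧ I.card = k ∧
    ∀ J : Finset α, CommonIndep M₁ M₂ J → J.card = k → J ≠ I → setW W I < setW W J

theorem aux_indep_of_select {α : Type*} [DecidableEq α] (M : Matroid α) (hE : M.E = Set.univ)
    (I Y X : Finset α) (hI : M.Indep ↑I) (hXI : ∀ x ∈ X, x ∉ I) (w r : α → ℤ)
    (h : ∀ x ∈ X, ∃ A : Finset α, I \ Y ⊆ A ∧ A ⊆ I ∧ M.Indep ↑(insert x A) ∧
      ∀ x' ∈ X, x' ≠ x → M.Indep ↑(insert x' A) → w x < w x' ∨ (w x = w x' ∧ r x < r x')) :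
    M.Indep ↑((I \ Y) ∪ X) := by
  by_contra hcon
  have hdep : M.Dep ↑((I \ Y) ∪ X) := by
    rw [← Matroid.not_indep_iff (by rw [hE]; exact Set.subset_univ _)]; exact hcon
  obtain ⟨C, hCs, hC⟩ := hdep.exists_isCircuit_subset
  classical
  let D : Finset α := X.filter (fun x => x ∈ C)
  have hDne : D.Nonempty := by
    by_contra hne
    rw [Finset.not_nonempty_iff_eq_empty] at hne
    apply hC.dep.not_indep
    apply hI.subset
    intro c hc
    have h1 := hCs hc
    have h2 : c ∉ D := by simp [hne]
    simp only [D, Finset.mem_filter] at h2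
    simp at h1 ⊢
    tauto
  obtain ⟨x, hxD, hmax⟩ := Finset.exists_max_image D (fun x => toLex (w x, r x)) hDne
  simp only [D, Finset.mem_filter] at hxD hmax
  obtain ⟨A, hBA, hAI, hxA, hA⟩ := h x hxD.1
  have hAind : M.Indep ↑A := hI.subset (by exact_mod_cast hAI)
  have hx1 : x ∉ M.closure ↑A := by
    rw [hAind.notMem_closure_iff_of_notMem (by
      intro hh; exact hXI x hxD.1 (hAI (by exact_mod_cast hh))) (by rw [hE]; trivial)]
    simpa using hxA
  apply hx1
  have hx2 := hC.mem_closure_sdiff_singleton_of_mem hxD.2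
  have hsub : C \ {x} ⊆ M.closure ↑A := by
    rintro c ⟨hc, hcx⟩
    have hcx' : c ≠ x := by simpa using hcx
    have h1 := hCs hc
    simp only [Finset.coe_union, Set.mem_union, Finset.mem_coe] at h1
    rcases h1 with h1 | h1
    · exact M.mem_closure_of_mem (by exact_mod_cast hBA h1) (by rw [hE]; exact Set.subset_univ _)
    · by_contra hcc
      rw [hAind.notMem_closure_iff_of_notMem (by
        intro hh; exact hXI c h1 (hAI (by exact_mod_cast hh))) (by rw [hE]; trivial)] at hcc
      have h3 := hA c h1 hcx' (by simpa using hcc)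
      have h4 := hmax c ⟨h1, hc⟩
      rw [Prod.Lex.toLex_le_toLex] at h4
      simp only at h4
      omega
  have h5 := M.closure_subset_closure hsub hx2
  rwa [Matroid.closure_closure] at h5

theorem aux_symm_exchange {α : Type*} [DecidableEq α] (M : Matroid α) (hE : M.E = Set.univ)
    (I J : Finset α) (hI : M.Indep ↑I) (hJ : M.Indep ↑J) (hc : I.card = J.card)
    (x : α) (hxJ : x ∈ J) (hxI : x ∉ I) :
    ∃ y ∈ I, y ∉ J ∧ M.Indep ↑(insert x (I.erase y)) ∧ M.Indep ↑(insert y (J.erase x)) := by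
  have hJx : M.Indep ↑(J.erase x) := hJ.subset (by exact_mod_cast Finset.erase_subset _ _)
  by_cases hIx : M.Indep ↑(insert x I)
  · obtain ⟨y, hyI, hyJ, hy⟩ := hJx.augment_finset hI (by
      rw [Finset.card_erase_of_mem hxJ, hc]
      have := Finset.card_pos.2 ⟨x, hxJ⟩
      omega)
    have hyx : y ≠ x := fun h => hxI (h ▸ hyI)
    refine ⟨y, hyI, fun h => hyJ (Finset.mem_erase.2 ⟨hyx, h⟩), hIx.subset ?_, by simpa using hy⟩
    exact_mod_cast Finset.insert_subset_insert _ (Finset.erase_subset _ _)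
  · have hcl : x ∈ M.closure ↑I := by
      by_contra hcc
      rw [hI.notMem_closure_iff_of_notMem (by exact_mod_cast hxI) (by rw [hE]; trivial)] at hcc
      exact hIx (by simpa using hcc)
    have hxI' : x ∉ (↑I : Set α) := by exact_mod_cast hxI
    have hC := hI.fundCircuit_isCircuit hcl hxI'
    have hxC : x ∈ M.fundCircuit x ↑I := M.mem_fundCircuit x _
    have hxcl := hC.mem_closure_sdiff_singleton_of_mem hxC
    have hxn : x ∉ M.closure ↑(J.erase x) := by
      rw [hJx.notMem_closure_iff_of_notMem (by simp) (by rw [hE]; trivial)]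
      rw [← Finset.coe_insert, Finset.insert_erase hxJ]; exact hJ
    have : ∃ y ∈ M.fundCircuit x ↑I \ {x}, y ∉ M.closure ↑(J.erase x) := by
      by_contra! hall
      apply hxn
      have h5 := M.closure_subset_closure (show M.fundCircuit x ↑I \ {x} ⊆ M.closure ↑(J.erase x) from hall) hxcl
      rwa [Matroid.closure_closure] at h5
    obtain ⟨y, ⟨hyC, hyx⟩, hycl⟩ := this
    have hyx' : y ≠ x := by simpa using hyx
    have hyI : y ∈ I := by
      have := M.fundCircuit_subset_insert x ↑I hyC
      simpa [hyx'] using this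
    rw [hJx.notMem_closure_iff (by rw [hE]; trivial)] at hycl
    refine ⟨y, hyI, fun h => hycl.2 (by simp [hyx', h]), ?_, by simpa using hycl.1⟩
    rw [hI.mem_fundCircuit_iff hcl hxI'] at hyC
    refine hyC.subset ?_
    intro z
    simp
    rintro (rfl | ⟨h1, h2⟩)
    · exact ⟨Or.inl rfl, Ne.symm hyx'⟩
    · exact ⟨Or.inr h1, h2⟩

/-- local optimality of an independent set -/
def LocOpt {α : Type*} [DecidableEq α] (M : Matroid α) (I : Finset α) (w : α → ℤ) : Prop :=
  ∀ y ∈ I, ∀ x, x ∉ I → M.Indep ↑(insert x (I.erase y)) → w y ≤ w x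

theorem setW_insert_erase {α : Type*} [DecidableEq α] (w : α → ℤ) (J : Finset α) (x y : α)
    (hx : x ∈ J) (hy : y ∉ J) : setW w (insert y (J.erase x)) = setW w J - w x + w y := by
  unfold setW
  rw [Finset.sum_insert (by simp [hy]), Finset.sum_erase_eq_sub hx]; ring

theorem LocOpt.le_same {α : Type*} [DecidableEq α] (M : Matroid α) (hE : M.E = Set.univ)
    (I : Finset α) (hI : M.Indep ↑I) (w : α → ℤ) (h : LocOpt M I w) :
    ∀ (n : ℕ) (J : Finset α), (J \ I).card = n → M.Indep ↑J → I.card = J.card →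
      setW w I ≤ setW w J := by
  intro n
  induction n with
  | zero =>
    intro J hn hJ hc
    rw [Finset.card_eq_zero, Finset.sdiff_eq_empty_iff_subset] at hn
    rw [Finset.eq_of_subset_of_card_le hn hc.le]
  | succ n ih =>
    intro J hn hJ hc
    obtain ⟨x, hx⟩ := Finset.card_pos.1 (by omega : 0 < (J \ I).card)
    obtain ⟨hxJ, hxI⟩ := Finset.mem_sdiff.1 hx
    obtain ⟨y, hyI, hyJ, h1, h2⟩ := aux_symm_exchange M hE I J hI hJ hc x hxJ hxI
    have h3 := ih (insert y (J.erase x)) (by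
      have : insert y (J.erase x) \ I = (J \ I).erase x := by
        ext z; simp only [Finset.mem_sdiff, Finset.mem_insert, Finset.mem_erase]
        constructor
        · rintro ⟨rfl | h, h'⟩
          · exact absurd hyI h'
          · tauto
        · tauto
      rw [this, Finset.card_erase_of_mem hx, hn]; rfl) h2 (by
      rw [Finset.card_insert_of_notMem (by simp [hyJ]), Finset.card_erase_of_mem hxJ]
      have := Finset.card_pos.2 ⟨x, hxJ⟩
      omega)
    rw [setW_insert_erase w J x y hxJ hyJ] at h3
    have h4 := h y hyI x hxI h1
    linarith

theorem LocOpt.le_succ {α : Type*} [DecidableEq α] (M : Matroid α) (hE : M.E = Set.univ)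
    (I : Finset α) (hI : M.Indep ↑I) (w : α → ℤ) (h : LocOpt M I w) (m : ℤ)
    (hm : ∀ x, memX M I x → m ≤ w x) (J : Finset α) (hJ : M.Indep ↑J)
    (hc : J.card = I.card + 1) : setW w I + m ≤ setW w J := by
  obtain ⟨x, hxJ, hxI, hx⟩ := hI.augment_finset hJ (by omega)
  have h1 := LocOpt.le_same M hE I hI w h _ (J.erase x) rfl
    (hJ.subset (by exact_mod_cast Finset.erase_subset _ _))
    (by rw [Finset.card_erase_of_mem hxJ, hc]; rfl)
  have h2 := hm x ⟨hxI, by simpa using hx⟩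
  have h3 : setW w (J.erase x) = setW w J - w x := by
    unfold setW; rw [Finset.sum_erase_eq_sub hxJ]
  linarith

/-- feasible weight splitting with bound `L` -/
structure Feas {α : Type*} [DecidableEq α] (M₁ M₂ : Matroid α) (W : α → ℤ) (I : Finset α)
    (w₁ w₂ : α → ℤ) (L : ℤ) : Prop where
  sum : ∀ s, w₁ s + w₂ s = W s
  lo₁ : LocOpt M₁ I w₁
  lo₂ : LocOpt M₂ I w₂
  x₁ : ∀ x, memX M₁ I x → 0 ≤ w₁ x
  x₂ : ∀ x, memX M₂ I x → L ≤ w₂ x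

theorem setW_add {α : Type*} (W w₁ w₂ : α → ℤ) (h : ∀ s, w₁ s + w₂ s = W s) (I : Finset α) :
    setW w₁ I + setW w₂ I = setW W I := by
  unfold setW; rw [← Finset.sum_add_distrib]; exact Finset.sum_congr rfl (fun s _ => h s)

theorem Feas.bound {α : Type*} [DecidableEq α] {M₁ M₂ : Matroid α} (hE₁ : M₁.E = Set.univ)
    (hE₂ : M₂.E = Set.univ) {W : α → ℤ} {I : Finset α} {w₁ w₂ : α → ℤ} {L : ℤ}
    (h : Feas M₁ M₂ W I w₁ w₂ L) (hI : CommonIndep M₁ M₂ I) (J : Finset α)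
    (hJ : CommonIndep M₁ M₂ J) (hc : J.card = I.card + 1) :
    setW w₁ I ≤ setW w₁ J ∧ setW w₂ I + L ≤ setW w₂ J := by
  have h1 := LocOpt.le_succ M₁ hE₁ I hI.1 w₁ h.lo₁ 0 h.x₁ J hJ.1 hc
  have h2 := LocOpt.le_succ M₂ hE₂ I hI.2 w₂ h.lo₂ L h.x₂ J hJ.2 hc
  exact ⟨by linarith, h2⟩

/-- tight arcs -/
def Tight {α : Type*} [DecidableEq α] (M₁ M₂ : Matroid α) (I : Finset α)
    (w₁ w₂ : α → ℤ) (u v : α) : Prop :=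
  (u ∈ I ∧ v ∉ I ∧ M₁.Indep ↑(insert v (I.erase u)) ∧ w₁ u = w₁ v) ∨
  (u ∉ I ∧ v ∈ I ∧ M₂.Indep ↑(insert u (I.erase v)) ∧ w₂ u = w₂ v)

/-- walks of length `n` -/
def TWalk {α : Type*} (T : α → α → Prop) (S F : α → Prop) (n : ℕ) (v : ℕ → α) : Prop :=
  S (v 0) ∧ F (v n) ∧ ∀ i < n, T (v i) (v (i + 1))

theorem exists_twalk {α : Type*} (T : α → α → Prop) (S F : α → Prop) (a b : α)
    (ha : S a) (h : Relation.ReflTransGen T a b) (hb : F b) : ∃ n v, TWalk T S F n v := by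
  induction h generalizing F with
  | refl => exact ⟨0, fun _ => a, ha, hb, by simp⟩
  | @tail c d _ hcd ih =>
    obtain ⟨n, v, h1, h2, h3⟩ := ih (fun z => z = c) rfl
    refine ⟨n + 1, fun i => if i ≤ n then v i else d, by simpa using h1, by simpa using hb, ?_⟩
    intro i hi
    by_cases hin : i < n
    · simp [hin.le, Nat.succ_le_of_lt hin, h3 i hin]
    · have : i = n := by omega
      subst this
      simp only [le_refl, if_true, show ¬ (i + 1 ≤ i) by omega, if_false]
      rw [h2]; exact hcd

theorem exists_short_twalk {α : Type*} (T : α → α → Prop) (S F : α → Prop)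
    (h : ∃ n v, TWalk T S F n v) : ∃ n v, TWalk T S F n v ∧
      (∀ i ≤ n, S (v i) → i = 0) ∧ (∀ i ≤ n, F (v i) → i = n) ∧
      (∀ i ≤ n, ∀ j ≤ n, T (v i) (v j) → j ≤ i + 1) ∧
      (∀ i ≤ n, ∀ j ≤ n, v i = v j → i = j) := by
  classical
  obtain ⟨v, hv⟩ := Nat.find_spec h
  have hmin : ∀ m, m < Nat.find h → ∀ u, ¬ TWalk T S F m u := by
    intro m hm u hu; exact Nat.find_min h hm ⟨u, hu⟩
  generalize Nat.find h = n at hv hmin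
  obtain ⟨h1, h2, h3⟩ := hv
  have hS : ∀ i ≤ n, S (v i) → i = 0 := by
    intro i hi hs
    by_contra hne
    apply hmin (n - i) (by omega) (fun t => v (t + i))
    refine ⟨by simpa using hs, by simpa [Nat.sub_add_cancel hi] using h2, fun t ht => ?_⟩
    have := h3 (t + i) (by omega)
    simpa [add_right_comm] using this
  have hF : ∀ i ≤ n, F (v i) → i = n := by
    intro i hi hs
    by_contra hne
    exact hmin i (by omega) v ⟨h1, hs, fun t ht => h3 t (by omega)⟩
  have hT : ∀ i ≤ n, ∀ j ≤ n, T (v i) (v j) → j ≤ i + 1 := by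
    intro i hi j hj hij
    by_contra hne
    apply hmin (n - (j - i - 1)) (by omega) (fun t => if t ≤ i then v t else v (t + (j - i - 1)))
    refine ⟨by simpa using h1, ?_, fun t ht => ?_⟩
    · simp only [show ¬ (n - (j - i - 1) ≤ i) by omega, if_false]
      rw [show n - (j - i - 1) + (j - i - 1) = n by omega]; exact h2
    · rcases lt_trichotomy t i with hti | hti | hti
      · simp only [hti.le, show t + 1 ≤ i by omega, if_true]
        exact h3 t (by omega)
      · subst hti
        simp only [le_refl, if_true, show ¬ (t + 1 ≤ t) by omega, if_false]
        rw [show t + 1 + (j - t - 1) = j by omega]; exact hij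
      · simp only [show ¬ (t ≤ i) by omega, show ¬ (t + 1 ≤ i) by omega, if_false]
        rw [show t + 1 + (j - i - 1) = t + (j - i - 1) + 1 by omega]
        exact h3 _ (by omega)
  have hinj : ∀ i ≤ n, ∀ j ≤ n, i < j → v i ≠ v j := by
    intro i hi j hj hij he
    rcases Nat.lt_or_ge j n with hjn | hjn
    · have := hT i hi (j + 1) (by omega) (by rw [he]; exact h3 j hjn)
      omega
    · have : j = n := by omega
      subst this
      have := hF i hi (by rw [he]; exact h2)
      omega
  refine ⟨n, v, ⟨h1, h2, h3⟩, hS, hF, hT, ?_⟩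
  intro i hi j hj he
  by_contra hne
  rcases Nat.lt_or_gt_of_ne hne with h | h
  · exact hinj i hi j hj h he
  · exact hinj j hj i hi h he.symm

theorem Feas.exists_twalk {α : Type*} [DecidableEq α] {M₁ M₂ : Matroid α}
    {W : α → ℤ} {I : Finset α} {w₁ w₂ : α → ℤ} {L : ℤ}
    (h : Feas M₁ M₂ W I w₁ w₂ L) (hno : ∀ u₁ u₂, ¬ Feas M₁ M₂ W I u₁ u₂ (L + 1)) :
    ∃ n v, TWalk (Tight M₁ M₂ I w₁ w₂) (fun x => memX M₁ I x ∧ w₁ x = 0)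
      (fun x => memX M₂ I x ∧ w₂ x = L) n v := by
  classical
  by_contra hcon
  let R : α → Prop := fun v => ∃ a, (memX M₁ I a ∧ w₁ a = 0) ∧
    Relation.ReflTransGen (Tight M₁ M₂ I w₁ w₂) a v
  have hR : ∀ u v, R u → Tight M₁ M₂ I w₁ w₂ u v → R v := by
    rintro u v ⟨a, ha, hau⟩ huv
    exact ⟨a, ha, hau.tail huv⟩
  have hR1 : ∀ x, memX M₁ I x → w₁ x = 0 → R x := fun x h1 h2 => ⟨x, ⟨h1, h2⟩, .refl⟩
  have hR2 : ∀ x, memX M₂ I x → w₂ x = L → ¬ R x := by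
    rintro x h1 h2 ⟨a, ha, hax⟩
    exact hcon (_root_.exists_twalk _ _ _ a x ha hax ⟨h1, h2⟩)
  apply hno (fun s => if R s then w₁ s else w₁ s - 1) (fun s => if R s then w₂ s else w₂ s + 1)
  refine ⟨?_, ?_, ?_, ?_, ?_⟩
  · intro s
    have := h.sum s
    by_cases hs : R s <;> simp only [hs, if_true, if_false] <;> linarith
  · intro y hy x hx hind
    have h1 := h.lo₁ y hy x hx hind
    have h2 : R y → w₁ y = w₁ x → R x := fun hy' he => hR y x hy' (Or.inl ⟨hy, hx, hind, he⟩)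
    by_cases hs : R y <;> by_cases hs' : R x <;> simp only [hs, hs', if_true, if_false]
    · exact h1
    · have : w₁ y ≠ w₁ x := fun he => hs' (h2 hs he)
      omega
    · omega
    · omega
  · intro y hy x hx hind
    have h1 := h.lo₂ y hy x hx hind
    have h2 : R x → w₂ x = w₂ y → R y := fun hy' he => hR x y hy' (Or.inr ⟨hx, hy, hind, he⟩)
    by_cases hs : R y <;> by_cases hs' : R x <;> simp only [hs, hs', if_true, if_false]
    · exact h1
    · omega
    · have : w₂ x ≠ w₂ y := fun he => hs (h2 hs' he)
      omega
    · omega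
  · intro x hx
    have h1 := h.x₁ x hx
    have h2 := hR1 x hx
    by_cases hs : R x <;> simp only [hs, if_true, if_false]
    · exact h1
    · have : w₁ x ≠ 0 := fun he => hs (h2 he)
      omega
  · intro x hx
    have h1 := h.x₂ x hx
    have h2 := hR2 x hx
    by_cases hs : R x <;> simp only [hs, if_true, if_false]
    · have : w₂ x ≠ L := fun he => h2 he hs
      omega
    · omega

theorem Feas.path_ge {α : Type*} [DecidableEq α] {M₁ M₂ : Matroid α}
    {W : α → ℤ} {I : Finset α} {w₁ w₂ : α → ℤ} {L : ℤ}
    (h : Feas M₁ M₂ W I w₁ w₂ L) (l : List α) (hl : IsXPath M₁ M₂ I l) : L ≤ listW W I l := by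
  obtain ⟨hne, hch, -, hx1, hx2⟩ := hl
  let d : α → ℤ := fun s => if s ∈ I then - w₁ s else w₂ s
  have hd : ∀ u v, ExchAdj M₁ M₂ I u v → d v ≤ d u + exchWt W I v := by
    intro u v huv
    have hs := h.sum v
    rcases huv with ⟨hu, hv, hi⟩ | ⟨hu, hv, hi⟩
    · have := h.lo₁ u hu v hv hi
      simp only [d, exchWt, hu, hv, if_true, if_false]; linarith
    · have := h.lo₂ v hv u hu hi
      simp only [d, exchWt, hu, hv, if_true, if_false]; linarith
  have key : ∀ (l : List α) (hne : l ≠ []), l.IsChain (ExchAdj M₁ M₂ I) →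
      d (l.getLast hne) ≤ d (l.head hne) - exchWt W I (l.head hne) + listW W I l := by
    intro l
    induction l with
    | nil => intro hne; exact absurd rfl hne
    | cons a l ih =>
      intro _ hc
      cases l with
      | nil => simp [listW]
      | cons b l =>
        rw [List.isChain_cons_cons] at hc
        have h1 := ih (by simp) hc.2
        have h2 := hd a b hc.1
        simp only [List.head_cons, listW, List.map_cons, List.sum_cons] at h1 ⊢
        rw [List.getLast_cons (by simp)]
        linarith
  have h1 := key l hne hch
  have h2 := h.x₁ _ hx1
  have h3 := h.x₂ _ hx2
  have h4 := h.sum (l.head hne)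
  simp only [d, exchWt, hx1.1, hx2.1, if_false] at h1
  linarith

theorem sum_symmDiff_aux {α : Type*} [DecidableEq α] (f : α → ℤ) (I P : Finset α) :
    ∑ x ∈ (I \ P) ∪ (P \ I), f x = ∑ x ∈ I, f x + ∑ x ∈ P, exchWt f I x := by
  rw [Finset.sum_union (by
    rw [Finset.disjoint_left]; intro a ha hb
    simp only [Finset.mem_sdiff] at ha hb; tauto)]
  have h1 := Finset.sum_inter_add_sum_sdiff I P f
  have h2 := Finset.sum_inter_add_sum_sdiff P I (exchWt f I)
  have h3 : ∑ x ∈ P ∩ I, exchWt f I x = - ∑ x ∈ P ∩ I, f x := by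
    rw [← Finset.sum_neg_distrib]
    refine Finset.sum_congr rfl (fun x hx => ?_)
    simp [exchWt, (Finset.mem_inter.1 hx).2]
  have h4 : ∑ x ∈ P \ I, exchWt f I x = ∑ x ∈ P \ I, f x := by
    refine Finset.sum_congr rfl (fun x hx => ?_)
    simp [exchWt, (Finset.mem_sdiff.1 hx).2]
  rw [Finset.inter_comm] at h3 h2
  linarith

theorem Feas.augment {α : Type*} [DecidableEq α] {M₁ M₂ : Matroid α} (hE₁ : M₁.E = Set.univ)
    (hE₂ : M₂.E = Set.univ) {W : α → ℤ} {I : Finset α} {w₁ w₂ : α → ℤ} {L : ℤ}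
    (h : Feas M₁ M₂ W I w₁ w₂ L) (hI : CommonIndep M₁ M₂ I)
    (hno : ∀ u₁ u₂, ¬ Feas M₁ M₂ W I u₁ u₂ (L + 1)) :
    ∃ (l : List α) (I' : Finset α), IsXPath M₁ M₂ I l ∧ listW W I l = L ∧
      CommonIndep M₁ M₂ I' ∧ I'.card = I.card + 1 ∧ setW W I' = setW W I + L := by
  classical
  obtain ⟨n, v, ⟨hS0, hFn, hT⟩, hS, hF, hTs, hinj⟩ := exists_short_twalk _ _ _ (h.exists_twalk hno)
  obtain ⟨idx, hidx⟩ : ∃ idx : α → ℕ, ∀ i ≤ n, idx (v i) = i := by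
    refine ⟨fun a => if h : ∃ i, i ≤ n ∧ v i = a then h.choose else 0, fun i hi => ?_⟩
    have hex : ∃ j, j ≤ n ∧ v j = v i := ⟨i, hi, rfl⟩
    simp only [hex, dif_pos]
    exact hinj _ hex.choose_spec.1 _ hi hex.choose_spec.2
  let P : Finset α := (Finset.range (n + 1)).image v
  have hP : ∀ x, x ∈ P ↔ ∃ i, i ≤ n ∧ v i = x := by
    intro x; simp [P, Nat.lt_succ_iff]
  have hinjOn : Set.InjOn v ↑(Finset.range (n + 1)) := by
    intro i hi j hj he
    simp only [Finset.coe_range, Set.mem_Iio] at hi hj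
    exact hinj i (by omega) j (by omega) he
  have hsumP : ∀ f : α → ℤ, ∑ x ∈ P, f x = ∑ i ∈ Finset.range (n + 1), f (v i) := fun f =>
    Finset.sum_image hinjOn
  have hadj : ∀ i < n, ExchAdj M₁ M₂ I (v i) (v (i + 1)) := by
    intro i hi
    rcases hT i hi with ⟨a, b, c, _⟩ | ⟨a, b, c, _⟩
    · exact Or.inl ⟨a, b, c⟩
    · exact Or.inr ⟨a, b, c⟩
  -- partial sums
  have hsW : ∀ j ≤ n, ∑ i ∈ Finset.range (j + 1), exchWt W I (v i) =
      if v j ∈ I then - w₁ (v j) else w₂ (v j) := by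
    intro j
    induction j with
    | zero =>
      intro _
      have := h.sum (v 0)
      simp [exchWt, hS0.1.1]; linarith [hS0.2]
    | succ j ih =>
      intro hj
      rw [Finset.sum_range_succ, ih (by omega)]
      have hs := h.sum (v (j + 1))
      rcases hT j (by omega) with ⟨a, b, c, d⟩ | ⟨a, b, c, d⟩ <;>
        simp only [exchWt, a, b, if_true, if_false] <;> linarith
  have hs1 : ∀ j ≤ n, ∑ i ∈ Finset.range (j + 1), exchWt (fun _ => 1) I (v i) =
      if v j ∈ I then 0 else 1 := by
    intro j
    induction j with
    | zero => intro _; simp [exchWt, hS0.1.1]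
    | succ j ih =>
      intro hj
      rw [Finset.sum_range_succ, ih (by omega)]
      rcases hT j (by omega) with ⟨a, b, c, d⟩ | ⟨a, b, c, d⟩ <;>
        simp [exchWt, a, b]
  have hWn := hsW n le_rfl
  have h1n := hs1 n le_rfl
  simp only [hFn.1.1, if_false] at hWn h1n
  have hlist : listW W I ((List.range (n + 1)).map v) = L := by
    have hgen : ∀ m : ℕ, (List.map (exchWt W I) ((List.range m).map v)).sum =
        ∑ i ∈ Finset.range m, exchWt W I (v i) := by
      intro m
      induction m with
      | zero => simp
      | succ m ih =>
        rw [List.range_succ, Finset.sum_range_succ, List.map_append, List.map_append,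
          List.sum_append, ih]
        simp
    rw [← hFn.2, ← hWn, listW, hgen]
  refine ⟨(List.range (n + 1)).map v, (I \ P) ∪ (P \ I), ⟨by simp, ?_, ?_, ?_, ?_⟩, hlist,
    ⟨?_, ?_⟩, ?_, ?_⟩
  · show List.IsChain _ _
    rw [List.isChain_iff_getElem]
    intro i hi
    simp only [List.length_map, List.length_range] at hi
    simpa using hadj i (by omega)
  · apply List.Nodup.map_on _ List.nodup_range
    intro i hi j hj he
    simp only [List.mem_range] at hi hj
    exact hinj i (by omega) j (by omega) he
  · have : ((List.range (n + 1)).map v).head (by simp) = v 0 := by simp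
    rw [this]; exact hS0.1
  · have : ((List.range (n + 1)).map v).getLast (by simp) = v n := by simp
    rw [this]; exact hFn.1
  · apply aux_indep_of_select M₁ hE₁ I P (P \ I) hI.1
      (fun x hx => (Finset.mem_sdiff.1 hx).2) w₁ (fun x => - (idx x : ℤ))
    intro x hx
    obtain ⟨hxP, hxI⟩ := Finset.mem_sdiff.1 hx
    obtain ⟨i, hi, rfl⟩ := (hP x).1 hxP
    rcases Nat.eq_zero_or_pos i with rfl | hpos
    · refine ⟨I, Finset.sdiff_subset, subset_rfl, hS0.1.2, ?_⟩
      intro x' hx' hne hind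
      obtain ⟨hxP', hxI'⟩ := Finset.mem_sdiff.1 hx'
      obtain ⟨j, hj, rfl⟩ := (hP x').1 hxP'
      have h1 := h.x₁ (v j) ⟨hxI', hind⟩
      have h2 : w₁ (v j) ≠ 0 := by
        intro h0
        have := hS j hj ⟨⟨hxI', hind⟩, h0⟩
        subst this; exact hne rfl
      left; have := hS0.2; omega
    · obtain ⟨i, rfl⟩ : ∃ m, i = m + 1 := ⟨i - 1, by omega⟩
      rcases hT i (by omega) with ⟨a, b, c, d⟩ | ⟨a, b, c, d⟩
      swap
      · exact absurd b hxI
      refine ⟨I.erase (v i), ?_, Finset.erase_subset _ _, c, ?_⟩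
      · intro z hz
        obtain ⟨hz1, hz2⟩ := Finset.mem_sdiff.1 hz
        refine Finset.mem_erase.2 ⟨fun he => hz2 ((hP z).2 ⟨i, by omega, he.symm⟩), hz1⟩
      · intro x' hx' hne hind
        obtain ⟨hxP', hxI'⟩ := Finset.mem_sdiff.1 hx'
        obtain ⟨j, hj, rfl⟩ := (hP x').1 hxP'
        have h1 := h.lo₁ _ a _ hxI' hind
        by_cases he : w₁ (v i) = w₁ (v j)
        · right
          refine ⟨by omega, ?_⟩
          have h2 := hTs i (by omega) j hj (Or.inl ⟨a, hxI', hind, he⟩)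
          have h3 : j ≠ i + 1 := by rintro rfl; exact hne rfl
          rw [hidx j hj, hidx (i + 1) hi]
          omega
        · left; omega
  · apply aux_indep_of_select M₂ hE₂ I P (P \ I) hI.2
      (fun x hx => (Finset.mem_sdiff.1 hx).2) w₂ (fun x => (idx x : ℤ))
    intro x hx
    obtain ⟨hxP, hxI⟩ := Finset.mem_sdiff.1 hx
    obtain ⟨i, hi, rfl⟩ := (hP x).1 hxP
    rcases Nat.eq_or_lt_of_le hi with rfl | hlt
    · refine ⟨I, Finset.sdiff_subset, subset_rfl, hFn.1.2, ?_⟩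
      intro x' hx' hne hind
      obtain ⟨hxP', hxI'⟩ := Finset.mem_sdiff.1 hx'
      obtain ⟨j, hj, rfl⟩ := (hP x').1 hxP'
      have h1 := h.x₂ (v j) ⟨hxI', hind⟩
      have h2 : w₂ (v j) ≠ L := by
        intro h0
        have := hF j hj ⟨⟨hxI', hind⟩, h0⟩
        subst this; exact hne rfl
      left; have := hFn.2; omega
    · rcases hT i hlt with ⟨a, b, c, d⟩ | ⟨a, b, c, d⟩
      · exact absurd a hxI
      refine ⟨I.erase (v (i + 1)), ?_, Finset.erase_subset _ _, c, ?_⟩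
      · intro z hz
        obtain ⟨hz1, hz2⟩ := Finset.mem_sdiff.1 hz
        refine Finset.mem_erase.2 ⟨fun he => hz2 ((hP z).2 ⟨i + 1, by omega, he.symm⟩), hz1⟩
      · intro x' hx' hne hind
        obtain ⟨hxP', hxI'⟩ := Finset.mem_sdiff.1 hx'
        obtain ⟨j, hj, rfl⟩ := (hP x').1 hxP'
        have h1 := h.lo₂ _ b _ hxI' hind
        by_cases he : w₂ (v j) = w₂ (v (i + 1))
        · right
          refine ⟨by omega, ?_⟩
          have h2 := hTs j hj (i + 1) (by omega) (Or.inr ⟨hxI', b, hind, he⟩)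
          have h3 : j ≠ i := by rintro rfl; exact hne rfl
          rw [hidx j hj, hidx i hi]
          omega
        · left; omega
  · have h1 := sum_symmDiff_aux (fun _ => (1 : ℤ)) I P
    rw [hsumP, h1n] at h1
    simp only [Finset.sum_const, nsmul_eq_mul, mul_one] at h1
    exact_mod_cast h1
  · have h1 := sum_symmDiff_aux W I P
    rw [hsumP, hWn, hFn.2] at h1
    exact h1

theorem step_lemma {α : Type*} [Fintype α] [DecidableEq α] (M₁ M₂ : Matroid α)
    (hE₁ : M₁.E = Set.univ) (hE₂ : M₂.E = Set.univ) (W : α → ℤ) (I : Finset α)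
    (hI : CommonIndep M₁ M₂ I) (w₁ w₂ : α → ℤ) (hsum : ∀ s, w₁ s + w₂ s = W s)
    (h₁ : LocOpt M₁ I w₁) (h₂ : LocOpt M₂ I w₂) (J : Finset α)
    (hJ : CommonIndep M₁ M₂ J) (hc : J.card = I.card + 1) :
    ∃ L u₁ u₂, Feas M₁ M₂ W I u₁ u₂ L ∧ ∀ t₁ t₂, ¬ Feas M₁ M₂ W I t₁ t₂ (L + 1) := by
  obtain ⟨c, hcc⟩ := (Set.finite_range w₁).bddBelow
  obtain ⟨e, he⟩ := (Set.finite_range w₂).bddBelow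
  have hc1 : ∀ s, c ≤ w₁ s := fun s => hcc ⟨s, rfl⟩
  have he1 : ∀ s, e ≤ w₂ s := fun s => he ⟨s, rfl⟩
  obtain ⟨L, ⟨u₁, u₂, hu⟩, hL⟩ := Int.exists_greatest_of_bdd
    (P := fun L => ∃ u₁ u₂, Feas M₁ M₂ W I u₁ u₂ L)
    ⟨setW W J - setW W I, by
      rintro L ⟨u₁, u₂, hu⟩
      have h1 := hu.bound hE₁ hE₂ hI J hJ hc
      have h2 := setW_add W u₁ u₂ hu.sum I
      have h3 := setW_add W u₁ u₂ hu.sum J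
      linarith⟩
    ⟨e + c, fun s => w₁ s - c, fun s => w₂ s + c, by
      refine ⟨fun s => by have := hsum s; linarith, ?_, ?_, ?_, ?_⟩
      · intro y hy x hx hi
        have := h₁ y hy x hx hi
        simpa using this
      · intro y hy x hx hi
        have := h₂ y hy x hx hi
        simpa using this
      · intro x _; have := hc1 x; simpa using this
      · intro x _; have := he1 x; simpa using this⟩
  refine ⟨L, u₁, u₂, hu, fun t₁ t₂ ht => ?_⟩
  have := hL (L + 1) ⟨t₁, t₂, ht⟩
  omega

theorem exists_split {α : Type*} [Fintype α] [DecidableEq α] (M₁ M₂ : Matroid α)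
    (hE₁ : M₁.E = Set.univ) (hE₂ : M₂.E = Set.univ) (W : α → ℤ) (k : ℕ) :
    ∀ J : Finset α, IsMinWtOfSize M₁ M₂ W k J → ∃ w₁ w₂ : α → ℤ, (∀ s, w₁ s + w₂ s = W s) ∧
      LocOpt M₁ J w₁ ∧ LocOpt M₂ J w₂ := by
  induction k with
  | zero =>
    rintro J ⟨-, hJ, -⟩
    rw [Finset.card_eq_zero] at hJ
    subst hJ
    exact ⟨W, fun _ => 0, by simp, by simp [LocOpt], by simp [LocOpt]⟩
  | succ k ih =>
    rintro J ⟨hJ, hJc, hJm⟩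
    classical
    obtain ⟨I, hI⟩ : ∃ I, IsMinWtOfSize M₁ M₂ W k I := by
      obtain ⟨K, hKJ, hK⟩ := Finset.exists_subset_card_eq (show k ≤ J.card by omega)
      have hKJ' : (↑K : Set α) ⊆ ↑J := by exact_mod_cast hKJ
      obtain ⟨I, hI, hm⟩ := Finset.exists_min_image
        (Finset.univ.filter (fun I : Finset α => CommonIndep M₁ M₂ I ∧ I.card = k)) (setW W)
        ⟨K, Finset.mem_filter.2 ⟨Finset.mem_univ _, ⟨hJ.1.subset hKJ', hJ.2.subset hKJ'⟩, hK⟩⟩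
      simp only [Finset.mem_filter, Finset.mem_univ, true_and] at hI hm
      exact ⟨I, hI.1, hI.2, fun J h1 h2 => hm J ⟨h1, h2⟩⟩
    obtain ⟨w₁, w₂, hs, h1, h2⟩ := ih I hI
    obtain ⟨hIc, hIk, -⟩ := hI
    have hc : J.card = I.card + 1 := by omega
    obtain ⟨L, u₁, u₂, hu, hno⟩ := step_lemma M₁ M₂ hE₁ hE₂ W I hIc w₁ w₂ hs h1 h2 J hJ hc
    obtain ⟨l, I', -, -, hI', hc', hw'⟩ := hu.augment hE₁ hE₂ hIc hno
    have hJle := hJm I' hI' (by omega)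
    have hb := hu.bound hE₁ hE₂ hIc J hJ hc
    have e1 := setW_add W u₁ u₂ hu.sum I
    have e2 := setW_add W u₁ u₂ hu.sum J
    have hcard : ∀ y ∈ J, ∀ x, x ∉ J → (insert x (J.erase y)).card = I.card + 1 := by
      intro y hy x hx
      rw [Finset.card_insert_of_notMem (by simp [hx]), Finset.card_erase_of_mem hy]
      omega
    refine ⟨u₁, u₂, hu.sum, ?_, ?_⟩
    · intro y hy x hx hi
      have h5 := LocOpt.le_succ M₁ hE₁ I hIc.1 u₁ hu.lo₁ 0 hu.x₁ _ hi (hcard y hy x hx)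
      rw [setW_insert_erase _ _ _ _ hy hx] at h5
      linarith
    · intro y hy x hx hi
      have h5 := LocOpt.le_succ M₂ hE₂ I hIc.2 u₂ hu.lo₂ L hu.x₂ _ hi (hcard y hy x hx)
      rw [setW_insert_erase _ _ _ _ hy hx] at h5
      linarith

/-- If `I_k` is a minimum-weight size-`k` common independent set and some size-`(k+1)`
common independent set exists, then `min_{k+1}(M₁,M₂) = W(I_k) + L`, where `L` is the
minimum weight of a directed `X₁`–`X₂` path in the exchange graph `𝓔(M₁,M₂,I_k)`. -/
theorem min_kplus1_eq_weight_add_minPath {α : Type*} [Fintype α] [DecidableEq α]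
    (M₁ M₂ : Matroid α) (hE₁ : M₁.E = Set.univ) (hE₂ : M₂.E = Set.univ)
    (W : α → ℤ) (k : ℕ) (Ik : Finset α) (hIk : IsMinWtOfSize M₁ M₂ W k Ik)
    (hex : ∃ J : Finset α, CommonIndep M₁ M₂ J ∧ J.card = k + 1) :
    ∃ L : ℤ,
      IsLeast {w : ℤ | ∃ l : List α, IsXPath M₁ M₂ Ik l ∧ listW W Ik l = w} L ∧
      IsLeast {w : ℤ | ∃ J : Finset α, CommonIndep M₁ M₂ J ∧ J.card = k + 1 ∧ setW W J = w}
        (setW W Ik + L) := by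
  obtain ⟨w₁, w₂, hs, h1, h2⟩ := exists_split M₁ M₂ hE₁ hE₂ W k Ik hIk
  obtain ⟨J, hJ, hJc⟩ := hex
  obtain ⟨hIc, hk, -⟩ := hIk
  subst hk
  obtain ⟨L, u₁, u₂, hu, hno⟩ := step_lemma M₁ M₂ hE₁ hE₂ W Ik hIc w₁ w₂ hs h1 h2 J hJ hJc
  obtain ⟨l, I', hl, hlw, hI', hc', hw'⟩ := hu.augment hE₁ hE₂ hIc hno
  refine ⟨L, ⟨⟨l, hl, hlw⟩, ?_⟩, ⟨⟨I', hI', hc', hw'⟩, ?_⟩⟩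
  · rintro w ⟨l', hl', rfl⟩
    exact hu.path_ge l' hl'
  · rintro w ⟨K, hK, hKc, rfl⟩
    have hb := hu.bound hE₁ hE₂ hIc K hK hKc
    have e1 := setW_add W u₁ u₂ hu.sum Ik
    have e2 := setW_add W u₁ u₂ hu.sum K
    linarith
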